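/- arXiv:2602.21218 — 2 statements merged into one kernel-verified Lean document; each statement's English description precedes it below -/
import Mathlib

section
/- Gaussian mechanism (Lemma A.1 / Dwork–Roth bound). Let X be a measurable space, n ≥ 1, d ≥ 1, and let f : (Fin n → X) → EuclideanSpace ℝ (Fin d) satisfy ‖f(D) − f(D')‖ ≤ Δ for all neighboring datasets D, D' (substitution relation), where Δ ≥ 0. Let ε ∈ (0, 1], δ ∈ (0, 1), and σ ≥ Δ · √(2 · ln(1.25/δ)) / ε. Then the mechanism M defined by M(D) = the pushforward of the centered Gaussian measure N(0, σ²I_d) on EuclideanSpace ℝ (Fin d) under the translation x ↦ f(D) + x satisfies (ε, δ)-differential privacy: for all neighboring D, D' and every measurable set O, M(D)(O) ≤ exp(ε) · M(D')(O) + δ. -/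
/-!
Let `g` be the density of `N(0, σ² I)` and let `g_w` be its translate by `w`. For every order
`α ≥ 1`, Bernoulli's inequality gives `exp y ≤ 1 + exp (α y) / α`. With `y` the log-likelihood
ratio `log (g_u / g_v)` minus `ε`, this reads
`g_u ≤ exp ε * g_v + exp (-(α - 1) ε) / α * g_u ^ α * g_v ^ (1 - α)`. Completing the square,
`g_u ^ α * g_v ^ (1 - α)` is `exp (α (α - 1) ‖u - v‖² / (2 σ²))` times the translate of `g` by
`v + α (u - v)`, which has total mass one, so its coefficient is an admissible additive error.

If `‖u - v‖ √(2 L) ≤ σ ε`, the order `α = 1 + 2 L / ε` makes this error at most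
`exp (ε / 2 - L) / (1 + 2 L / ε)`. For `L = log (1.25 / δ) ≥ 1 / 5` and `ε ≤ 1` this is at most `δ`,
because `exp (1 / 2) ≤ 1.25 * 1.4`.
-/


open MeasureTheory
open scoped BigOperators ENNReal

/-- Two size-`n` datasets are neighboring under the substitution relation:
they differ in exactly one coordinate. -/
def Neighbors {X : Type*} {n : ℕ} (D D' : Fin n → X) : Prop :=
  ∃ j : Fin n, D j ≠ D' j ∧ ∀ i : Fin n, i ≠ j → D i = D' i

/-- A mechanism `M` on size-`n` datasets satisfies `(ε, δ)`-differential
privacy if for all neighboring datasets and all measurable output sets `O`,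
`M D O ≤ exp ε * M D' O + δ`. -/
def DP {X : Type*} [MeasurableSpace X] {Ω : Type*} [MeasurableSpace Ω] {n : ℕ}
    (M : (Fin n → X) → Measure Ω) (ε δ : ℝ) : Prop :=
  ∀ D D' : Fin n → X, Neighbors D D' → ∀ O : Set Ω, MeasurableSet O →
    M D O ≤ ENNReal.ofReal (Real.exp ε) * M D' O + ENNReal.ofReal δ

/-- The centered Gaussian measure `N(0, σ² I_d)` on `EuclideanSpace ℝ (Fin d)`,
given by its density with respect to Lebesgue measure. -/
noncomputable def gaussianMeasure (d : ℕ) (σ : ℝ) : Measure (EuclideanSpace ℝ (Fin d)) :=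
  volume.withDensity fun x =>
    ENNReal.ofReal ((2 * Real.pi * σ ^ 2) ^ (-(d : ℝ) / 2) *
      Real.exp (-‖x‖ ^ 2 / (2 * σ ^ 2)))

lemma exp_le_one_add_exp_mul_div {α : ℝ} (hα : 1 ≤ α) (y : ℝ) :
    Real.exp y ≤ 1 + Real.exp (α * y) / α := by
  have hα0 : 0 < α := by linarith
  have bernoulli : 1 + α * (Real.exp y - 1) ≤ Real.exp (α * y) := by
    have h := one_add_mul_self_le_rpow_one_add (s := Real.exp y - 1)
      (by linarith [Real.exp_pos y]) hα
    rwa [add_sub_cancel, ← Real.exp_mul, mul_comm y] at h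
  rw [← sub_le_iff_le_add', le_div_iff₀ hα0]
  linarith

lemma exp_le_exp_mul_exp_add {α : ℝ} (hα : 1 ≤ α) (a b ε : ℝ) :
    Real.exp a ≤
      Real.exp ε * Real.exp b + Real.exp (α * a + (1 - α) * b - (α - 1) * ε) / α := by
  calc Real.exp a = Real.exp (ε + b) * Real.exp (a - b - ε) := by
        rw [← Real.exp_add]; ring_nf
    _ ≤ Real.exp (ε + b) * (1 + Real.exp (α * (a - b - ε)) / α) := by
        gcongr; exact exp_le_one_add_exp_mul_div hα _
    _ = Real.exp (ε + b) + Real.exp (ε + b + α * (a - b - ε)) / α := by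
        rw [Real.exp_add (ε + b)]; ring
    _ = _ := by rw [Real.exp_add]; ring_nf

lemma renyi_exponent_le {ε L q : ℝ} (hε : 0 < ε) (hL : 0 < L) (hq : 4 * q * L ≤ ε ^ 2) :
    (1 + 2 * L / ε) * (2 * L / ε) * q - 2 * L / ε * ε ≤ ε / 2 - L := by
  have hq' : q ≤ ε ^ 2 / (4 * L) := by
    rw [le_div_iff₀ (by positivity)]; linarith
  calc (1 + 2 * L / ε) * (2 * L / ε) * q - 2 * L / ε * ε
      ≤ (1 + 2 * L / ε) * (2 * L / ε) * (ε ^ 2 / (4 * L)) - 2 * L / ε * ε := by gcongr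
    _ = ε / 2 - L := by field_simp; ring

lemma one_fifth_le_log_div {δ : ℝ} (hδ0 : 0 < δ) (hδ1 : δ ≤ 1) :
    1 / 5 ≤ Real.log (1.25 / δ) := by
  have h := Real.one_sub_inv_le_log_of_pos (x := 1.25 / δ) (by positivity)
  calc (1 / 5 : ℝ) ≤ 1 - (1.25 / δ)⁻¹ := by rw [inv_div]; norm_num; linarith
    _ ≤ Real.log (1.25 / δ) := h

lemma exp_half_sub_log_div_le {ε δ : ℝ} (hε : 0 < ε) (hε1 : ε ≤ 1) (hδ0 : 0 < δ) (hδ1 : δ ≤ 1) :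
    Real.exp (ε / 2 - Real.log (1.25 / δ)) / (1 + 2 * Real.log (1.25 / δ) / ε) ≤ δ := by
  have hL : 1 / 5 ≤ Real.log (1.25 / δ) := one_fifth_le_log_div hδ0 hδ1
  have hexp : Real.exp (ε / 2) ≤ 1.75 := by
    rw [Real.exp_half]
    refine Real.sqrt_le_iff.2 ⟨by norm_num, ?_⟩
    calc Real.exp ε ≤ Real.exp 1 := Real.exp_le_exp.2 hε1
      _ ≤ 1.75 ^ 2 := by linarith [Real.exp_one_lt_three]
  have hlog : 2 / 5 ≤ 2 * Real.log (1.25 / δ) / ε := by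
    rw [le_div_iff₀ hε]; linarith
  rw [div_le_iff₀ (by linarith), Real.exp_sub, Real.exp_log (by positivity)]
  calc Real.exp (ε / 2) / (1.25 / δ) ≤ 1.75 / (1.25 / δ) := by gcongr
    _ = δ * (1 + 2 / 5) := by field_simp; norm_num
    _ ≤ δ * (1 + 2 * Real.log (1.25 / δ) / ε) := by gcongr

/-- `(ε, δ)`-indistinguishability of two measures, the relation that differential privacy demands
of the outputs of a mechanism on neighboring datasets. It is not symmetric in `μ` and `ν`. -/
def Indistinguishable {Ω : Type*} [MeasurableSpace Ω] (ε δ : ℝ) (μ ν : Measure Ω) : Prop :=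
  ∀ O : Set Ω, MeasurableSet O → μ O ≤ ENNReal.ofReal (Real.exp ε) * ν O + ENNReal.ofReal δ

namespace Indistinguishable

variable {Ω : Type*} [MeasurableSpace Ω] {ε δ δ' : ℝ} {μ ν ρ : Measure Ω}

lemma refl (hε : 0 ≤ ε) (δ : ℝ) (μ : Measure Ω) : Indistinguishable ε δ μ μ := fun O _ =>
  calc μ O = 1 * μ O := (one_mul _).symm
    _ ≤ ENNReal.ofReal (Real.exp ε) * μ O := by
      gcongr; exact ENNReal.one_le_ofReal.2 (Real.one_le_exp hε)
    _ ≤ _ := le_self_add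

lemma mono (h : Indistinguishable ε δ μ ν) (hδ : δ ≤ δ') : Indistinguishable ε δ' μ ν :=
  fun O hO => (h O hO).trans (by gcongr)

lemma of_le_add [IsProbabilityMeasure ρ]
    (h : μ ≤ ENNReal.ofReal (Real.exp ε) • ν + ENNReal.ofReal δ • ρ) :
    Indistinguishable ε δ μ ν := fun O _ =>
  calc μ O ≤ ENNReal.ofReal (Real.exp ε) * ν O + ENNReal.ofReal δ * ρ O := h O
    _ ≤ ENNReal.ofReal (Real.exp ε) * ν O + ENNReal.ofReal δ * 1 := by gcongr; exact prob_le_one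
    _ = _ := by rw [mul_one]

end Indistinguishable

lemma map_withDensity_comp {α β : Type*} [MeasurableSpace α] [MeasurableSpace β]
    {μ : Measure α} {ν : Measure β} {g : α → β} (hg : MeasurePreserving g μ ν)
    (hg' : MeasurableEmbedding g) (f : β → ℝ≥0∞) :
    (μ.withDensity (f ∘ g)).map g = ν.withDensity f := by
  ext s hs
  rw [hg'.map_apply, withDensity_apply _ (hg'.measurable hs), withDensity_apply _ hs]
  exact hg.setLIntegral_comp_preimage_emb hg' f s

lemma dist_sq_lineMap {V P : Type*} [NormedAddCommGroup V] [InnerProductSpace ℝ V]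
    [MetricSpace P] [NormedAddTorsor V P] (x u v : P) (t : ℝ) :
    dist x (AffineMap.lineMap v u t) ^ 2 =
      t * dist x u ^ 2 + (1 - t) * dist x v ^ 2 + t * (t - 1) * dist u v ^ 2 := by
  have hline : x -ᵥ AffineMap.lineMap v u t = (x -ᵥ v) - t • (u -ᵥ v) := by
    rw [AffineMap.lineMap_apply, vsub_vadd_eq_vsub_sub]
  have hu : x -ᵥ u = (x -ᵥ v) - (u -ᵥ v) := (vsub_sub_vsub_cancel_right x u v).symm
  simp only [dist_eq_norm_vsub V]
  rw [hline, hu, norm_sub_sq_real, norm_sub_sq_real, norm_smul, inner_smul_right, mul_pow,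
    Real.norm_eq_abs, sq_abs]
  ring

section Gaussian

variable {E : Type*} [NormedAddCommGroup E] [InnerProductSpace ℝ E]

/-- The density of the centered Gaussian measure with covariance `σ² I` on an inner product space,
whose dimension enters through `Module.finrank`. -/
noncomputable def gaussianDensity (σ : ℝ) (x : E) : ℝ :=
  (2 * Real.pi * σ ^ 2) ^ (-(Module.finrank ℝ E : ℝ) / 2) * Real.exp (-‖x‖ ^ 2 / (2 * σ ^ 2))

lemma gaussianDensity_nonneg (σ : ℝ) (x : E) : 0 ≤ gaussianDensity σ x := by
  unfold gaussianDensity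
  positivity

lemma gaussianDensity_sub_le (σ : ℝ) {α : ℝ} (hα : 1 ≤ α) (ε : ℝ) (u v x : E) :
    gaussianDensity σ (x - u) ≤ Real.exp ε * gaussianDensity σ (x - v) +
      Real.exp (α * (α - 1) * (‖u - v‖ ^ 2 / (2 * σ ^ 2)) - (α - 1) * ε) / α *
        gaussianDensity σ (x - AffineMap.lineMap v u α) := by
  have complete_square : α * (-‖x - u‖ ^ 2 / (2 * σ ^ 2)) +
        (1 - α) * (-‖x - v‖ ^ 2 / (2 * σ ^ 2)) - (α - 1) * ε =
      (α * (α - 1) * (‖u - v‖ ^ 2 / (2 * σ ^ 2)) - (α - 1) * ε) +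
        -‖x - AffineMap.lineMap v u α‖ ^ 2 / (2 * σ ^ 2) := by
    simp only [← dist_eq_norm, dist_sq_lineMap]
    ring
  have hexp := exp_le_exp_mul_exp_add hα (-‖x - u‖ ^ 2 / (2 * σ ^ 2))
    (-‖x - v‖ ^ 2 / (2 * σ ^ 2)) ε
  rw [complete_square, Real.exp_add] at hexp
  unfold gaussianDensity
  refine (mul_le_mul_of_nonneg_left hexp (by positivity)).trans_eq ?_
  ring

variable [MeasurableSpace E] [BorelSpace E]

lemma measurable_gaussianDensity (σ : ℝ) : Measurable (gaussianDensity σ : E → ℝ) := by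
  unfold gaussianDensity
  fun_prop

variable [FiniteDimensional ℝ E]

lemma lintegral_gaussianDensity {σ : ℝ} (hσ : 0 < σ) :
    ∫⁻ x : E, ENNReal.ofReal (gaussianDensity σ x) = 1 := by
  have hdensity (x : E) : gaussianDensity σ x =
      (2 * Real.pi * σ ^ 2) ^ (-(Module.finrank ℝ E : ℝ) / 2) *
        Real.exp (-(1 / (2 * σ ^ 2)) * ‖x‖ ^ 2) := by
    rw [gaussianDensity]; ring_nf
  have hexp : ∫ x : E, Real.exp (-(1 / (2 * σ ^ 2)) * ‖x‖ ^ 2) =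
      (2 * Real.pi * σ ^ 2) ^ ((Module.finrank ℝ E : ℝ) / 2) := by
    rw [GaussianFourier.integral_rexp_neg_mul_sq_norm (by positivity)]
    congr 1
    field_simp
  have hone : ∫ x : E, gaussianDensity σ x = 1 := by
    simp only [hdensity]
    rw [integral_const_mul, hexp, ← Real.rpow_add (by positivity), neg_div, neg_add_cancel,
      Real.rpow_zero]
  -- The Bochner integral of a non-integrable function is zero.
  have hint : Integrable (gaussianDensity σ : E → ℝ) :=
    .of_integral_ne_zero (by rw [hone]; exact one_ne_zero)
  rw [← ofReal_integral_eq_lintegral_ofReal hint (.of_forall (gaussianDensity_nonneg σ)), hone,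
    ENNReal.ofReal_one]

variable (E) in
/-- The centered Gaussian measure with covariance `σ² I` on a finite-dimensional inner product
space, of which `gaussianMeasure` is the case of `EuclideanSpace ℝ (Fin d)`. At `σ = 0` it is not
a Dirac mass: it is the zero measure in positive dimension. -/
noncomputable def isotropicGaussian (σ : ℝ) : Measure E :=
  volume.withDensity fun x => ENNReal.ofReal (gaussianDensity σ x)

lemma gaussianMeasure_eq_isotropicGaussian (d : ℕ) (σ : ℝ) :
    gaussianMeasure d σ = isotropicGaussian (EuclideanSpace ℝ (Fin d)) σ := by
  simp only [gaussianMeasure, isotropicGaussian, gaussianDensity, finrank_euclideanSpace_fin]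

lemma isProbabilityMeasure_isotropicGaussian {σ : ℝ} (hσ : 0 < σ) :
    IsProbabilityMeasure (isotropicGaussian E σ) :=
  ⟨by rw [isotropicGaussian, withDensity_apply _ .univ, Measure.restrict_univ,
    lintegral_gaussianDensity hσ]⟩

lemma map_add_isotropicGaussian (σ : ℝ) (w : E) :
    (isotropicGaussian E σ).map (w + ·) =
      volume.withDensity fun x => ENNReal.ofReal (gaussianDensity σ (x - w)) := by
  rw [← map_withDensity_comp (measurePreserving_add_left volume w)
    (measurableEmbedding_addLeft w)]
  simp only [isotropicGaussian, Function.comp_def, add_sub_cancel_left]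

lemma map_add_isotropicGaussian_le (σ : ℝ) {α : ℝ} (hα : 1 ≤ α) (ε : ℝ) (u v : E) :
    (isotropicGaussian E σ).map (u + ·) ≤
      ENNReal.ofReal (Real.exp ε) • (isotropicGaussian E σ).map (v + ·) +
        ENNReal.ofReal
            (Real.exp (α * (α - 1) * (‖u - v‖ ^ 2 / (2 * σ ^ 2)) - (α - 1) * ε) / α) •
          (isotropicGaussian E σ).map (AffineMap.lineMap v u α + ·) := by
  have hmeas (w : E) : Measurable fun x => ENNReal.ofReal (gaussianDensity σ (x - w)) :=
    ((measurable_gaussianDensity σ).comp (measurable_sub_const w)).ennreal_ofReal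
  simp only [map_add_isotropicGaussian]
  rw [← withDensity_smul _ (hmeas _), ← withDensity_smul _ (hmeas _),
    ← withDensity_add_left ((hmeas v).const_smul _)]
  refine withDensity_mono (.of_forall fun x => ?_)
  have hnonneg (w : E) : 0 ≤ gaussianDensity σ (x - w) := gaussianDensity_nonneg σ _
  simp only [Pi.add_apply, Pi.smul_apply, smul_eq_mul]
  rw [← ENNReal.ofReal_mul (by positivity), ← ENNReal.ofReal_mul (by positivity),
    ← ENNReal.ofReal_add (mul_nonneg (by positivity) (hnonneg _))
      (mul_nonneg (by positivity) (hnonneg _))]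
  exact ENNReal.ofReal_le_ofReal (gaussianDensity_sub_le σ hα ε u v x)

lemma indistinguishable_map_add_of_order {σ : ℝ} (hσ : 0 < σ) {α : ℝ} (hα : 1 ≤ α) (ε : ℝ)
    (u v : E) :
    Indistinguishable ε
      (Real.exp (α * (α - 1) * (‖u - v‖ ^ 2 / (2 * σ ^ 2)) - (α - 1) * ε) / α)
      ((isotropicGaussian E σ).map (u + ·)) ((isotropicGaussian E σ).map (v + ·)) := by
  have := isProbabilityMeasure_isotropicGaussian (E := E) hσ
  have := Measure.isProbabilityMeasure_map (μ := isotropicGaussian E σ)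
    (measurable_const_add (AffineMap.lineMap v u α)).aemeasurable
  exact .of_le_add (map_add_isotropicGaussian_le σ hα ε u v)

lemma indistinguishable_map_add_of_norm_mul_sqrt_le {ε σ L : ℝ} (hε : 0 < ε) (hσ : 0 < σ)
    (hL : 0 < L) {u v : E} (h : ‖u - v‖ * √(2 * L) ≤ σ * ε) :
    Indistinguishable ε (Real.exp (ε / 2 - L) / (1 + 2 * L / ε))
      ((isotropicGaussian E σ).map (u + ·)) ((isotropicGaussian E σ).map (v + ·)) := by
  have hq : 4 * (‖u - v‖ ^ 2 / (2 * σ ^ 2)) * L ≤ ε ^ 2 :=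
    calc 4 * (‖u - v‖ ^ 2 / (2 * σ ^ 2)) * L = (‖u - v‖ * √(2 * L)) ^ 2 / σ ^ 2 := by
          rw [mul_pow, Real.sq_sqrt (by positivity)]; field_simp; ring
      _ ≤ (σ * ε) ^ 2 / σ ^ 2 := by gcongr
      _ = ε ^ 2 := by field_simp
  have hα : 1 ≤ 1 + 2 * L / ε := le_add_of_nonneg_right (by positivity)
  refine (indistinguishable_map_add_of_order hσ hα ε u v).mono ?_
  rw [add_sub_cancel_left]
  exact div_le_div_of_nonneg_right (Real.exp_le_exp.2 (renyi_exponent_le hε hL hq))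
    (by positivity)

theorem gaussian_mechanism_dp_general {X : Type*} [MeasurableSpace X] {n : ℕ}
    (f : (Fin n → X) → E) {Δ : ℝ}
    (hsens : ∀ D D' : Fin n → X, Neighbors D D' → ‖f D - f D'‖ ≤ Δ)
    {ε δ σ : ℝ} (hε : 0 < ε) (hε1 : ε ≤ 1) (hδ0 : 0 < δ) (hδ1 : δ ≤ 1)
    (hσ : σ ≥ Δ * √(2 * Real.log (1.25 / δ)) / ε) :
    DP (fun D => (isotropicGaussian E σ).map (f D + ·)) ε δ := by
  intro D D' hDD'
  change Indistinguishable ε δ ((isotropicGaussian E σ).map (f D + ·))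
    ((isotropicGaussian E σ).map (f D' + ·))
  have hL : 0 < Real.log (1.25 / δ) := by linarith [one_fifth_le_log_div hδ0 hδ1]
  have hnoise : ‖f D - f D'‖ * √(2 * Real.log (1.25 / δ)) ≤ σ * ε :=
    (mul_le_mul_of_nonneg_right (hsens D D' hDD') (Real.sqrt_nonneg _)).trans
      ((div_le_iff₀ hε).1 hσ)
  rcases eq_or_ne (f D) (f D') with heq | hne
  · rw [heq]
    exact .refl hε.le δ _
  · have hdist : 0 < ‖f D - f D'‖ := norm_sub_pos_iff.2 hne
    have hσε : 0 < σ * ε := (mul_pos hdist (Real.sqrt_pos.2 (by positivity))).trans_le hnoise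
    have hσ0 : 0 < σ := pos_of_mul_pos_left hσε hε.le
    exact (indistinguishable_map_add_of_norm_mul_sqrt_le hε hσ0 hL hnoise).mono
      (exp_half_sub_log_div_le hε hε1 hδ0 hδ1)

end Gaussian

/-- **Gaussian mechanism (Dwork–Roth bound).** If `f` has ℓ₂-sensitivity at
most `Δ` under the substitution neighboring relation, `ε ∈ (0,1]`, `δ ∈ (0,1)`,
and `σ ≥ Δ √(2 ln(1.25/δ)) / ε`, then adding `N(0, σ² I_d)` noise to `f`
is `(ε, δ)`-differentially private. -/
theorem gaussian_mechanism_dp {X : Type*} [MeasurableSpace X] {n d : ℕ}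
    (hn : 1 ≤ n) (hd : 1 ≤ d)
    (f : (Fin n → X) → EuclideanSpace ℝ (Fin d)) {Δ : ℝ} (hΔ : 0 ≤ Δ)
    (hsens : ∀ D D' : Fin n → X, Neighbors D D' → ‖f D - f D'‖ ≤ Δ)
    {ε δ σ : ℝ} (hε : 0 < ε) (hε1 : ε ≤ 1) (hδ0 : 0 < δ) (hδ1 : δ < 1)
    (hσ : σ ≥ Δ * Real.sqrt (2 * Real.log (1.25 / δ)) / ε) :
    DP (fun D => (gaussianMeasure d σ).map (fun x => f D + x)) ε δ := by
  simp only [gaussianMeasure_eq_isotropicGaussian]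
  exact gaussian_mechanism_dp_general f hsens hε hε1 hδ0 hδ1.le hσ
end

section
/- L-fold basic composition. Let X be a measurable space, n ≥ 1, L ≥ 1, and for each ℓ ∈ Fin L let M_ℓ : (Fin n → X) → Measure Ω_ℓ be a mechanism (with each M_ℓ(D) a probability measure) satisfying (ε, δ)-differential privacy under the substitution neighboring relation. Then the joint mechanism D ↦ ⨂_{ℓ ∈ Fin L} M_ℓ(D), assigning to each dataset the product (independent) probability measure on Π_{ℓ} Ω_ℓ, satisfies (L·ε, L·δ)-differential privacy. -/
/-!
Differential privacy bounds one measure `P` by another, `P O ≤ γ * Q O + δ` for every measurable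
`O`, and by the layer-cake formula such a bound passes to integrals of `[0, 1]`-valued functions
with the same `γ` and `δ`. To compose two bounds, slice `O ⊆ α × β` along the first coordinate:
the slice at `x` satisfies `P₂ Oₓ ≤ min (γ₂ * Q₂ Oₓ) 1 + δ₂`. The truncation at `1` is harmless
because `P₂` has mass at most one, and it makes `x ↦ min (γ₂ * Q₂ Oₓ) 1` an admissible integrand
for the first bound. Hence the `δ`s add; without truncation `δ₁` would be multiplied by `γ₂`.
-/

open MeasureTheory
open scoped ENNReal

lemma lintegral_eq_setLIntegral_Ioo_measure_lt {α : Type*} [MeasurableSpace α] (μ : Measure α)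
    {f : α → ℝ≥0∞} (hf : Measurable f) {b : ℝ} (hfb : ∀ x, f x ≤ ENNReal.ofReal b) :
    ∫⁻ x, f x ∂μ = ∫⁻ t in Set.Ioo 0 b, μ {x | ENNReal.ofReal t < f x} := by
  have hf_ne_top (x : α) : f x ≠ ∞ := ne_top_of_le_ne_top ENNReal.ofReal_ne_top (hfb x)
  have superlevel_eq_empty {t : ℝ} (ht : b ≤ t) : {x | ENNReal.ofReal t < f x} = ∅ :=
    Set.eq_empty_of_forall_notMem fun x hx =>
      ((hfb x).trans (ENNReal.ofReal_le_ofReal ht)).not_gt hx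
  calc ∫⁻ x, f x ∂μ
      = ∫⁻ x, ENNReal.ofReal (f x).toReal ∂μ := by
        simp only [ENNReal.ofReal_toReal (hf_ne_top _)]
    _ = ∫⁻ t in Set.Ioi 0, μ {x | t < (f x).toReal} :=
        lintegral_eq_lintegral_meas_lt μ (.of_forall fun _ => ENNReal.toReal_nonneg)
          hf.ennreal_toReal.aemeasurable
    _ = ∫⁻ t in Set.Ioi 0,
          (Set.Iio b).indicator (fun t => μ {x | ENNReal.ofReal t < f x}) t := by
        refine setLIntegral_congr_fun measurableSet_Ioi fun t (ht : 0 < t) => ?_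
        simp only [← ENNReal.ofReal_lt_iff_lt_toReal ht.le (hf_ne_top _)]
        by_cases htb : t < b
        · rw [Set.indicator_of_mem (Set.mem_Iio.2 htb)]
        · rw [Set.indicator_of_notMem (mt Set.mem_Iio.1 htb),
            superlevel_eq_empty (not_lt.1 htb), measure_empty]
    _ = ∫⁻ t in Set.Ioo 0 b, μ {x | ENNReal.ofReal t < f x} := by
        rw [setLIntegral_indicator measurableSet_Iio, Set.Iio_inter_Ioi]

/-- The one-sided comparison of measures behind differential privacy: `DP M ε δ` says that
`ApproxDominated (M D) (M D') γ δ'` for all neighboring `D`, `D'`, where `γ` is `exp ε` and `δ'` is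
`δ`, both pushed into `ℝ≥0∞` by `ENNReal.ofReal`. -/
def ApproxDominated {α : Type*} [MeasurableSpace α] (P Q : Measure α) (γ δ : ℝ≥0∞) : Prop :=
  ∀ O, MeasurableSet O → P O ≤ γ * Q O + δ

namespace ApproxDominated

variable {α β : Type*} [MeasurableSpace α] [MeasurableSpace β]

lemma lintegral_le {P Q : Measure α} {γ δ : ℝ≥0∞} (h : ApproxDominated P Q γ δ)
    {f : α → ℝ≥0∞} (hf : Measurable f) (hf1 : ∀ x, f x ≤ 1) :
    ∫⁻ x, f x ∂P ≤ γ * ∫⁻ x, f x ∂Q + δ := by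
  have layer_cake (μ : Measure α) :
      ∫⁻ x, f x ∂μ = ∫⁻ t in Set.Ioo 0 1, μ {x | ENNReal.ofReal t < f x} :=
    lintegral_eq_setLIntegral_Ioo_measure_lt μ hf (by simpa using hf1)
  have measurable_measure_lt : Measurable fun t : ℝ => Q {x | ENNReal.ofReal t < f x} :=
    Antitone.measurable fun s t hst =>
      measure_mono fun x hx => (ENNReal.ofReal_le_ofReal hst).trans_lt hx
  calc ∫⁻ x, f x ∂P
      = ∫⁻ t in Set.Ioo 0 1, P {x | ENNReal.ofReal t < f x} := layer_cake P
    _ ≤ ∫⁻ t in Set.Ioo (0 : ℝ) 1, (γ * Q {x | ENNReal.ofReal t < f x} + δ) :=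
        lintegral_mono fun t => h _ (measurableSet_lt measurable_const hf)
    _ = γ * (∫⁻ t in Set.Ioo 0 1, Q {x | ENNReal.ofReal t < f x}) + δ := by
        rw [lintegral_add_right _ measurable_const, lintegral_const_mul γ measurable_measure_lt,
          setLIntegral_const, Real.volume_Ioo, sub_zero, ENNReal.ofReal_one, mul_one]
    _ = γ * ∫⁻ x, f x ∂Q + δ := by rw [layer_cake Q]

lemma map {P Q : Measure α} {γ δ : ℝ≥0∞} (h : ApproxDominated P Q γ δ) {g : α → β}
    (hg : Measurable g) : ApproxDominated (P.map g) (Q.map g) γ δ := fun O hO => by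
  simpa only [Measure.map_apply hg hO] using h _ (hg hO)

lemma prod {P₁ Q₁ : Measure α} {P₂ Q₂ : Measure β} [SFinite Q₂] {γ₁ γ₂ δ₁ δ₂ : ℝ≥0∞}
    (hP₁ : P₁ Set.univ ≤ 1) (hP₂ : P₂ Set.univ ≤ 1)
    (h₁ : ApproxDominated P₁ Q₁ γ₁ δ₁) (h₂ : ApproxDominated P₂ Q₂ γ₂ δ₂) :
    ApproxDominated (P₁.prod P₂) (Q₁.prod Q₂) (γ₁ * γ₂) (δ₁ + δ₂) := fun O hO => by
  have : IsFiniteMeasure P₂ := ⟨hP₂.trans_lt ENNReal.one_lt_top⟩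
  have hQ₂ : Measurable fun x => Q₂ (Prod.mk x ⁻¹' O) := measurable_measure_prodMk_left hO
  have htrunc : Measurable fun x => min (γ₂ * Q₂ (Prod.mk x ⁻¹' O)) 1 :=
    (hQ₂.const_mul γ₂).min measurable_const
  have slice_le (x : α) :
      P₂ (Prod.mk x ⁻¹' O) ≤ min (γ₂ * Q₂ (Prod.mk x ⁻¹' O)) 1 + δ₂ := by
    rw [← min_add_add_right]
    exact le_min (h₂ _ (measurable_prodMk_left hO))
      (((measure_mono (Set.subset_univ _)).trans hP₂).trans le_self_add)
  calc P₁.prod P₂ O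
      = ∫⁻ x, P₂ (Prod.mk x ⁻¹' O) ∂P₁ := Measure.prod_apply hO
    _ ≤ ∫⁻ x, (min (γ₂ * Q₂ (Prod.mk x ⁻¹' O)) 1 + δ₂) ∂P₁ := lintegral_mono slice_le
    _ = ∫⁻ x, min (γ₂ * Q₂ (Prod.mk x ⁻¹' O)) 1 ∂P₁ + δ₂ * P₁ Set.univ := by
        rw [lintegral_add_left htrunc, lintegral_const]
    _ ≤ γ₁ * ∫⁻ x, min (γ₂ * Q₂ (Prod.mk x ⁻¹' O)) 1 ∂Q₁ + δ₁ + δ₂ := by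
        gcongr
        · exact h₁.lintegral_le htrunc fun x => min_le_right _ _
        · exact mul_le_of_le_one_right' hP₁
    _ ≤ γ₁ * ∫⁻ x, γ₂ * Q₂ (Prod.mk x ⁻¹' O) ∂Q₁ + δ₁ + δ₂ := by
        gcongr
        exact min_le_left _ _
    _ = γ₁ * γ₂ * Q₁.prod Q₂ O + (δ₁ + δ₂) := by
        rw [lintegral_const_mul γ₂ hQ₂, Measure.prod_apply hO, mul_assoc, add_assoc]

lemma pi_fin {m : ℕ} {Ω : Fin m → Type*} [∀ i, MeasurableSpace (Ω i)]
    {P Q : ∀ i, Measure (Ω i)} [∀ i, SigmaFinite (Q i)] {γ δ : Fin m → ℝ≥0∞}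
    (hP : ∀ i, P i Set.univ ≤ 1) (h : ∀ i, ApproxDominated (P i) (Q i) (γ i) (δ i)) :
    ApproxDominated (Measure.pi P) (Measure.pi Q) (∏ i, γ i) (∑ i, δ i) := by
  induction m with
  | zero =>
    rw [Subsingleton.elim P Q]
    exact fun O _ => by simp
  | succ m ih =>
    have (i : Fin (m + 1)) : IsFiniteMeasure (P i) := ⟨(hP i).trans_lt ENNReal.one_lt_top⟩
    have mass_le_one : Measure.pi (fun j : Fin m => P (Fin.succAbove 0 j)) Set.univ ≤ 1 := by
      rw [Measure.pi_univ]
      exact Finset.prod_le_one' fun j _ => hP _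
    have tail := ih (fun j => hP (Fin.succAbove 0 j)) fun j => h (Fin.succAbove 0 j)
    rw [← (measurePreserving_piFinSuccAbove P 0).symm.map_eq,
      ← (measurePreserving_piFinSuccAbove Q 0).symm.map_eq,
      Fin.prod_univ_succAbove γ 0, Fin.sum_univ_succAbove δ 0]
    exact ((h 0).prod (hP 0) mass_le_one tail).map (MeasurableEquiv.measurable _)

lemma pi {ι : Type*} [Fintype ι] {Ω : ι → Type*} [∀ i, MeasurableSpace (Ω i)]
    {P Q : ∀ i, Measure (Ω i)} [∀ i, SigmaFinite (Q i)] {γ δ : ι → ℝ≥0∞}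
    (hP : ∀ i, P i Set.univ ≤ 1) (h : ∀ i, ApproxDominated (P i) (Q i) (γ i) (δ i)) :
    ApproxDominated (Measure.pi P) (Measure.pi Q) (∏ i, γ i) (∑ i, δ i) := by
  have (i : ι) : IsFiniteMeasure (P i) := ⟨(hP i).trans_lt ENNReal.one_lt_top⟩
  let e := (Fintype.equivFin ι).symm
  rw [← (measurePreserving_piCongrLeft P e).map_eq, ← (measurePreserving_piCongrLeft Q e).map_eq,
    ← e.prod_comp, ← e.sum_comp]
  exact (pi_fin (fun j => hP (e j)) fun j => h (e j)).map (MeasurableEquiv.measurable _)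

end ApproxDominated

section Mechanism

variable {X : Type*} [MeasurableSpace X] {n : ℕ}

lemma dp_max_zero {Ω : Type*} [MeasurableSpace Ω] {M : (Fin n → X) → Measure Ω} {ε δ : ℝ} :
    DP M ε (max δ 0) ↔ DP M ε δ := by
  simp [DP, ENNReal.ofReal_max]

/-- A negative `δ i` acts as `0` in `DP` and cannot offset the positive ones, whence the `max`. -/
theorem basic_composition_L_general {ι : Type*} [Fintype ι] {Ω : ι → Type*}
    [∀ i, MeasurableSpace (Ω i)] (M : ∀ i, (Fin n → X) → Measure (Ω i))
    (hM : ∀ i D, M i D Set.univ ≤ 1) {ε δ : ι → ℝ} (hdp : ∀ i, DP (M i) (ε i) (δ i)) :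
    DP (fun D => Measure.pi fun i => M i D) (∑ i, ε i) (∑ i, max (δ i) 0) := by
  intro D D' hD O hO
  have (i : ι) : IsFiniteMeasure (M i D') := ⟨(hM i D').trans_lt ENNReal.one_lt_top⟩
  rw [Real.exp_sum, ENNReal.ofReal_prod_of_nonneg fun i _ => (Real.exp_pos (ε i)).le,
    ENNReal.ofReal_sum_of_nonneg fun i _ => le_max_right (δ i) 0]
  exact ApproxDominated.pi (fun i => hM i D) (fun i => dp_max_zero.2 (hdp i) D D' hD) O hO

end Mechanism

/-- **L-fold basic composition.** If each of `L` mechanisms (producing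
probability measures) satisfies `(ε, δ)`-DP, then the joint mechanism that
releases the independent product of all `L` outputs satisfies `(Lε, Lδ)`-DP. -/
theorem basic_composition_L {X : Type*} [MeasurableSpace X] {n L : ℕ}
    (hn : 1 ≤ n) (hL : 1 ≤ L)
    {Ω : Fin L → Type*} [∀ ℓ, MeasurableSpace (Ω ℓ)]
    (M : ∀ ℓ : Fin L, (Fin n → X) → Measure (Ω ℓ))
    (hP : ∀ ℓ D, IsProbabilityMeasure (M ℓ D))
    {ε δ : ℝ} (hdp : ∀ ℓ, DP (M ℓ) ε δ) :
    DP (fun D => Measure.pi (fun ℓ => M ℓ D)) ((L : ℝ) * ε) ((L : ℝ) * δ) := by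
  rw [← dp_max_zero, ← mul_zero (L : ℝ), ← mul_max_of_nonneg _ _ L.cast_nonneg]
  simpa using basic_composition_L_general M (fun ℓ D => (hP ℓ D).measure_univ.le) hdp
end
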